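/- Spectral monotonicity for open sets: Let G be a finite abstract simplicial complex with n elements, K ⊆ G a subcomplex, and U = G \ K the open complement with m elements. Then for every k with 1 ≤ k ≤ m, the k-th smallest eigenvalue of L_U is at most the (k + n − m)-th smallest eigenvalue of L_G; equivalently, after left-padding the ascending eigenvalue list of L_U with n − m zeros, λ_k(L_U) ≤ λ_k(L_G) for all 1 ≤ k ≤ n. -/

import Mathlib

open Matrix

/-- A finite abstract simplicial complex: a finite nonempty collection of nonempty
finite subsets of ℕ closed under taking nonempty subsets. -/
def IsComplex (G : Finset (Finset ℕ)) : Prop :=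
  G.Nonempty ∧ ∅ ∉ G ∧ ∀ x ∈ G, ∀ y : Finset ℕ, y ⊆ x → y.Nonempty → y ∈ G

/-- A subcomplex: a set of sets closed under taking nonempty subsets. -/
def IsSubcomplex (K : Finset (Finset ℕ)) : Prop :=
  ∀ x ∈ K, ∀ y : Finset ℕ, y ⊆ x → y.Nonempty → y ∈ K

/-- The incidence sign s(x,y) = (-1)^i when y is obtained from x by deleting the
(i+1)-th smallest element of x. -/
noncomputable def incSign (x y : Finset ℕ) : ℝ :=
  (-1 : ℝ) ^ (x.filter (fun v => ∃ w ∈ x \ y, v < w)).card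

/-- The exterior derivative matrix of a subset A of a simplicial complex. -/
noncomputable def extDer (A : Finset (Finset ℕ)) : Matrix A A ℝ :=
  Matrix.of fun x y =>
    if (y : Finset ℕ) ⊆ (x : Finset ℕ) ∧ (x : Finset ℕ).card = (y : Finset ℕ).card + 1
    then incSign (x : Finset ℕ) (y : Finset ℕ) else 0

/-- The Dirac matrix D = d + dᵀ. -/
noncomputable def dirac (A : Finset (Finset ℕ)) : Matrix A A ℝ :=
  extDer A + (extDer A)ᵀ

/-- The Hodge Laplacian L = D². -/
noncomputable def hodge (A : Finset (Finset ℕ)) : Matrix A A ℝ :=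
  dirac A * dirac A

/-- The block of the Hodge Laplacian acting on p-forms: the submatrix of L on
the p-simplices (sets of cardinality p+1). -/
noncomputable def hodgeBlock (A : Finset (Finset ℕ)) (p : ℕ) :
    Matrix (A.filter fun x => x.card = p + 1) (A.filter fun x => x.card = p + 1) ℝ :=
  (hodge A).submatrix
    (fun x => ⟨x.1, (Finset.mem_filter.mp x.2).1⟩)
    (fun x => ⟨x.1, (Finset.mem_filter.mp x.2).1⟩)

/-- The p-th Betti number: the dimension of the kernel of the p-form block of the
Hodge Laplacian. -/
noncomputable def betti (A : Finset (Finset ℕ)) (p : ℕ) : ℕ :=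
  Module.finrank ℝ (LinearMap.ker (Matrix.toLin' (hodgeBlock A p)))

open scoped Classical in
/-- The ascending list of eigenvalues (with multiplicity) of a real symmetric matrix. -/
noncomputable def sortedEigs {α : Type} [Fintype α] [DecidableEq α] (M : Matrix α α ℝ) :
    List ℝ :=
  if hM : M.IsHermitian then Multiset.sort (Finset.univ.val.map hM.eigenvalues) (· ≤ ·)
  else []

/-- The k-th entry (0-indexed) of the list `l` after left-padding it with zeros to length n. -/
noncomputable def padGet (l : List ℝ) (n k : ℕ) : ℝ :=
  if k < n - l.length then 0 else l.getD (k - (n - l.length)) 0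

lemma sorted_countP_lt (l : List ℝ) (hl : l.Pairwise (· ≤ ·)) (i : ℕ) (hi : i < l.length) :
    l.countP (fun a => decide (a < l[i])) ≤ i := by
  have h2 : (l.drop i).countP (fun a => decide (a < l[i])) = 0 := by
    rw [List.countP_eq_zero]
    intro a ha
    obtain ⟨j, hj, rfl⟩ := List.mem_iff_getElem.1 ha
    simp only [List.getElem_drop, decide_eq_true_eq, not_lt]
    rcases Nat.eq_zero_or_pos j with rfl | hjp
    · simp
    · exact (List.pairwise_iff_getElem.1 hl) _ _ _ _ (by omega)
  calc l.countP (fun a => decide (a < l[i]))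
      = (l.take i ++ l.drop i).countP (fun a => decide (a < l[i])) := by
        rw [List.take_append_drop]
    _ = (l.take i).countP (fun a => decide (a < l[i])) := by
        rw [List.countP_append, h2, add_zero]
    _ ≤ (l.take i).length := List.countP_le_length
    _ ≤ i := by simp

lemma sorted_countP_gt (l : List ℝ) (hl : l.Pairwise (· ≤ ·)) (i : ℕ) (hi : i < l.length) :
    l.countP (fun a => decide (l[i] < a)) + (i + 1) ≤ l.length := by
  have h2 : (l.take (i+1)).countP (fun a => decide (l[i] < a)) = 0 := by
    rw [List.countP_eq_zero]
    intro a ha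
    obtain ⟨j, hj, rfl⟩ := List.mem_iff_getElem.1 ha
    simp only [List.length_take] at hj
    simp only [List.getElem_take, decide_eq_true_eq, not_lt]
    rcases Nat.lt_or_ge j i with hjp | hjp
    · exact (List.pairwise_iff_getElem.1 hl) _ _ _ _ hjp
    · have : j = i := by omega
      subst this; simp
  have : l.countP (fun a => decide (l[i] < a)) ≤ (l.drop (i+1)).length := by
    have h3 : (l.take (i+1) ++ l.drop (i+1)).countP (fun a => decide (l[i] < a))
        = (l.drop (i+1)).countP (fun a => decide (l[i] < a)) := by
      rw [List.countP_append, h2, zero_add]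
    rw [List.take_append_drop] at h3
    rw [h3]
    exact List.countP_le_length
  simp only [List.length_drop] at this
  omega

/-- Spectral decomposition of the quadratic form, with the sorted list of eigenvalues. -/
lemma spec_decomp {α : Type} [Fintype α] [DecidableEq α] (M : Matrix α α ℝ)
    (hM : M.IsHermitian) :
    ∃ (v : α → α → ℝ), (∀ x : α → ℝ, x ⬝ᵥ x = ∑ j, (v j ⬝ᵥ x) ^ 2) ∧
      (∀ x : α → ℝ, x ⬝ᵥ (M *ᵥ x) = ∑ j, hM.eigenvalues j * (v j ⬝ᵥ x) ^ 2) := by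
  refine ⟨fun j => (hM.eigenvectorBasis j).ofLp, ?_, ?_⟩
  · intro x
    have h := hM.eigenvectorBasis.sum_inner_mul_inner (WithLp.toLp 2 x) (WithLp.toLp 2 x)
    simp only [EuclideanSpace.inner_eq_star_dotProduct, star_trivial] at h
    rw [← h]
    refine Finset.sum_congr rfl fun j _ => ?_
    rw [sq, dotProduct_comm x]
  · intro x
    have h := hM.eigenvectorBasis.sum_inner_mul_inner (WithLp.toLp 2 x) (WithLp.toLp 2 (M *ᵥ x))
    simp only [EuclideanSpace.inner_eq_star_dotProduct, star_trivial] at h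
    rw [dotProduct_comm, ← h]
    refine Finset.sum_congr rfl fun j _ => ?_
    have hT : Mᵀ = M := by simpa using hM.eq
    have h3 : (M *ᵥ x) ⬝ᵥ (hM.eigenvectorBasis j).ofLp
        = hM.eigenvalues j * ((hM.eigenvectorBasis j).ofLp ⬝ᵥ x) := by
      rw [dotProduct_comm, dotProduct_mulVec, ← mulVec_transpose, hT,
        hM.mulVec_eigenvectorBasis, smul_dotProduct, smul_eq_mul]
    rw [h3]
    ring

lemma sortedEigs_eq {α : Type} [Fintype α] [DecidableEq α] (M : Matrix α α ℝ)
    (hM : M.IsHermitian) :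
    sortedEigs M = Multiset.sort (Finset.univ.val.map hM.eigenvalues) (· ≤ ·) := by
  unfold sortedEigs
  rw [dif_pos hM]

lemma sortedEigs_length {α : Type} [Fintype α] [DecidableEq α] (M : Matrix α α ℝ)
    (hM : M.IsHermitian) : (sortedEigs M).length = Fintype.card α := by
  rw [sortedEigs_eq M hM]; simp

lemma sortedEigs_pairwise {α : Type} [Fintype α] [DecidableEq α] (M : Matrix α α ℝ)
    (hM : M.IsHermitian) : (sortedEigs M).Pairwise (· ≤ ·) := by
  rw [sortedEigs_eq M hM]; exact Multiset.pairwise_sort _ _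

lemma sortedEigs_countP {α : Type} [Fintype α] [DecidableEq α] (M : Matrix α α ℝ)
    (hM : M.IsHermitian) (p : ℝ → Prop) [DecidablePred p] :
    (sortedEigs M).countP (fun a => decide (p a)) =
      Fintype.card {j // p (hM.eigenvalues j)} := by
  rw [sortedEigs_eq M hM, ← Multiset.coe_countP, Multiset.sort_eq, Multiset.countP_map,
    Fintype.card_subtype]
  rfl

lemma sum_extend {α β : Type} [Fintype α] [Fintype β] (ι : β → α) (hι : Function.Injective ι)
    (f : α → ℝ) (x : β → ℝ) :
    f ⬝ᵥ (Function.extend ι x 0) = (f ∘ ι) ⬝ᵥ x := by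
  unfold dotProduct
  symm
  apply Fintype.sum_of_injective ι hι
  · intro a ha
    rw [Function.extend_apply' _ _ _ (by simpa using ha)]; simp
  · intro b
    simp [hι.extend_apply]

lemma quad_sq {α : Type} [Fintype α] (D : Matrix α α ℝ) (hD : Dᵀ = D) (y : α → ℝ) :
    y ⬝ᵥ ((D * D) *ᵥ y) = ∑ a, ((D *ᵥ y) a) ^ 2 := by
  rw [← mulVec_mulVec, dotProduct_mulVec, ← mulVec_transpose, hD]
  simp [dotProduct, sq]

lemma interlace {α β : Type} [Fintype α] [DecidableEq α] [Fintype β] [DecidableEq β]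
    (ι : β → α) (hι : Function.Injective ι) (D : Matrix α α ℝ) (hD : Dᵀ = D)
    (E : Matrix β β ℝ) (hE : E = D.submatrix ι ι)
    (hL : (D * D).IsHermitian) (hM : (E * E).IsHermitian) (i j : ℕ)
    (hi : i < (sortedEigs (E * E)).length) (hj : j < (sortedEigs (D * D)).length)
    (hij : i + Fintype.card α = j + Fintype.card β) :
    (sortedEigs (E * E))[i] ≤ (sortedEigs (D * D))[j] := by
  have hET : Eᵀ = E := by rw [hE, transpose_submatrix, hD]
  have c1 := sorted_countP_lt _ (sortedEigs_pairwise _ hM) i hi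
  have c2 := sorted_countP_gt _ (sortedEigs_pairwise _ hL) j hj
  set μ := (sortedEigs (E * E))[i]
  set lam := (sortedEigs (D * D))[j]
  rw [sortedEigs_countP _ hM (fun a => a < μ)] at c1
  rw [sortedEigs_countP _ hL (fun a => lam < a), sortedEigs_length _ hL] at c2
  obtain ⟨v, v1, v2⟩ := spec_decomp _ hL
  obtain ⟨u, u1, u2⟩ := spec_decomp _ hM
  let N : Matrix ({j // hM.eigenvalues j < μ} ⊕ {j // lam < hL.eigenvalues j}) β ℝ :=
    Matrix.of (Sum.elim (fun a => u a.1) (fun a => v a.1 ∘ ι))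
  have hker : LinearMap.ker N.mulVecLin ≠ ⊥ := by
    apply LinearMap.ker_ne_bot_of_finrank_lt
    simp only [Module.finrank_fintype_fun_eq_card, Fintype.card_sum]
    omega
  obtain ⟨x, hx, hx0⟩ := Submodule.exists_mem_ne_zero_of_ne_bot hker
  have hx' : N *ᵥ x = 0 := by simpa using hx
  have hxu : ∀ a, hM.eigenvalues a < μ → u a ⬝ᵥ x = 0 := fun a ha =>
    congrFun hx' (Sum.inl ⟨a, ha⟩)
  have hxv : ∀ a, lam < hL.eigenvalues a → (v a ∘ ι) ⬝ᵥ x = 0 := fun a ha =>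
    congrFun hx' (Sum.inr ⟨a, ha⟩)
  set y := Function.extend ι x 0 with hy
  have hyy : y ⬝ᵥ y = x ⬝ᵥ x := by
    rw [hy, sum_extend ι hι, Function.extend_comp hι]
  have hpos : 0 < x ⬝ᵥ x := by
    have h0 : 0 ≤ x ⬝ᵥ x := Finset.sum_nonneg fun a _ => mul_self_nonneg _
    exact lt_of_le_of_ne h0 fun h => hx0 (dotProduct_self_eq_zero.1 h.symm)
  have low : μ * (x ⬝ᵥ x) ≤ x ⬝ᵥ ((E * E) *ᵥ x) := by
    rw [u1, u2, Finset.mul_sum]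
    refine Finset.sum_le_sum fun a _ => ?_
    by_cases ha : hM.eigenvalues a < μ
    · rw [hxu a ha]; simp
    · exact mul_le_mul_of_nonneg_right (not_lt.1 ha) (sq_nonneg _)
  have high : y ⬝ᵥ ((D * D) *ᵥ y) ≤ lam * (y ⬝ᵥ y) := by
    rw [v1, v2, Finset.mul_sum]
    refine Finset.sum_le_sum fun a _ => ?_
    by_cases ha : lam < hL.eigenvalues a
    · rw [hy, sum_extend ι hι, hxv a ha]; simp
    · exact mul_le_mul_of_nonneg_right (not_lt.1 ha) (sq_nonneg _)
  have mid : x ⬝ᵥ ((E * E) *ᵥ x) ≤ y ⬝ᵥ ((D * D) *ᵥ y) := by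
    rw [quad_sq E hET, quad_sq D hD]
    have h1 : ∀ b, (E *ᵥ x) b = (D *ᵥ y) (ι b) := by
      intro b
      change _ = D (ι b) ⬝ᵥ y
      rw [hy, sum_extend ι hι, hE]
      rfl
    simp only [h1]
    refine (Finset.sum_map Finset.univ ⟨ι, hι⟩ (fun a => ((D *ᵥ y) a) ^ 2)).symm.trans_le ?_
    exact Finset.sum_le_sum_of_subset_of_nonneg (Finset.subset_univ _)
      fun a _ _ => sq_nonneg _
  rw [hyy] at high
  exact le_of_mul_le_mul_right (low.trans (mid.trans high)) hpos

lemma dirac_transpose (A : Finset (Finset ℕ)) : (dirac A)ᵀ = dirac A := by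
  unfold dirac
  rw [transpose_add, transpose_transpose, add_comm]

lemma hodge_posSemidef (A : Finset (Finset ℕ)) : (hodge A).PosSemidef := by
  have h := Matrix.posSemidef_conjTranspose_mul_self (dirac A)
  rwa [conjTranspose_eq_transpose_of_trivial, dirac_transpose] at h

/-- **Spectral monotonicity for open sets.** If K ⊆ G is a subcomplex of a complex G
with n elements and U = G \ K has m elements, then λ_k(L_U) ≤ λ_{k+n-m}(L_G) for
1 ≤ k ≤ m; equivalently, after left-padding the ascending spectrum of L_U with n-m
zeros, λ_k(L_U) ≤ λ_k(L_G) for all 1 ≤ k ≤ n. -/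
theorem spectral_monotonicity_open (G K : Finset (Finset ℕ)) (hG : IsComplex G)
    (hKG : K ⊆ G) (hK : IsSubcomplex K) :
    (∀ k : ℕ, 1 ≤ k → k ≤ (G \ K).card →
      (sortedEigs (hodge (G \ K))).getD (k - 1) 0 ≤
        (sortedEigs (hodge G)).getD (k + G.card - (G \ K).card - 1) 0) ∧
    (∀ k : ℕ, 1 ≤ k → k ≤ G.card →
      padGet (sortedEigs (hodge (G \ K))) G.card (k - 1) ≤
        (sortedEigs (hodge G)).getD (k - 1) 0) := by
  have hUG : G \ K ⊆ G := Finset.sdiff_subset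
  have hcard := Finset.card_le_card hUG
  have hl1 : (sortedEigs (hodge (G \ K))).length = (G \ K).card := by
    rw [sortedEigs_length _ (hodge_posSemidef _).isHermitian, Fintype.card_coe]
  have hl2 : (sortedEigs (hodge G)).length = G.card := by
    rw [sortedEigs_length _ (hodge_posSemidef _).isHermitian, Fintype.card_coe]
  have first : ∀ k : ℕ, 1 ≤ k → k ≤ (G \ K).card →
      (sortedEigs (hodge (G \ K))).getD (k - 1) 0 ≤
        (sortedEigs (hodge G)).getD (k + G.card - (G \ K).card - 1) 0 := by
    intro k hk1 hk2
    have hi : k - 1 < (sortedEigs (hodge (G \ K))).length := by omega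
    have hj : k + G.card - (G \ K).card - 1 < (sortedEigs (hodge G)).length := by omega
    rw [List.getD_eq_getElem _ _ hi, List.getD_eq_getElem _ _ hj]
    refine interlace (fun u : (G \ K : Finset (Finset ℕ)) => (⟨u.1, hUG u.2⟩ : G)) ?_ (dirac G)
      (dirac_transpose G) (dirac (G \ K)) ?_
      (hodge_posSemidef _).isHermitian (hodge_posSemidef _).isHermitian _ _ hi hj ?_
    · intro a b h
      exact Subtype.ext (by simpa using h)
    · ext a b
      rfl
    · rw [Fintype.card_coe, Fintype.card_coe]
      omega
  refine ⟨first, ?_⟩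
  intro k hk1 hk2
  unfold padGet
  rw [hl1]
  split_ifs with h
  · have hj : k - 1 < (sortedEigs (hodge G)).length := by omega
    rw [List.getD_eq_getElem _ _ hj]
    have hmem := List.getElem_mem hj
    have hH := (hodge_posSemidef G).isHermitian
    generalize (sortedEigs (hodge G))[k - 1] = e at hmem
    rw [sortedEigs_eq _ hH, Multiset.mem_sort, Multiset.mem_map] at hmem
    obtain ⟨a, -, rfl⟩ := hmem
    exact (hodge_posSemidef G).eigenvalues_nonneg a
  · have := first (k - (G.card - (G \ K).card)) (by omega) (by omega)
    convert this using 2 <;> omega
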